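/- arXiv:1203.6495 — 2 statements merged into one kernel-verified Lean document; each statement's English description precedes it below -/
import Mathlib

section
/- Let V be a 6-dimensional complex vector space, A ⊆ ⋀³V a Lagrangian subspace, 0 ≠ v₀ ∈ V, and V₀ a 5-dimensional subspace with V = ℂv₀ ⊕ V₀ and A ∩ ⋀³V₀ = 0. Then the radical of the form q_A (i.e. {α ∈ ⋀²V₀ : q_A(β,α) = 0 for all β ∈ ⋀²V₀}) equals {α ∈ ⋀²V₀ : v₀∧α ∈ A}, and the map α ↦ v₀∧α is a linear isomorphism from this radical onto A ∩ (v₀∧⋀²V). -/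
/-!
Let `q̃` map `⋀ᵖV₀` to `⋀^q V₀`, as `q̃_A` does for `p = 2`, `q = 3`. Since `v₀ ∧ α + q̃(α) ∈ A` and
`A ∩ ⋀^q V₀ = 0`, we have `v₀ ∧ α ∈ A` exactly when `q̃(α) = 0`. So the radical is
`{α | v₀ ∧ α ∈ A}` as soon as the pairing `(β, γ) ↦ vol (v₀ ∧ β ∧ γ)` of `⋀ᵖV₀` with `⋀^q V₀` is
nondegenerate in `γ`.

Contraction with a functional that kills `V₀` but not `v₀` shows that `v₀ ∧ ·` is injective on each
`⋀ᵏV₀`, and `v₀ ∧ ⋀ᵏV = v₀ ∧ ⋀ᵏV₀` because `v₀ ∧ v₀ = 0`. Nondegeneracy thus reduces to this: for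
`p + k ≤ dim V`, an element of `⋀ᵏV` whose wedge with all of `⋀ᵖV` is zero vanishes. Wedging with
one vector at a time, it suffices that a `w` of degree below `n` annihilated by `n` basis vectors
`bᵢ` vanishes. Contracting `bᵢ ∧ w = 0` with `bᵢ*` gives `w = bᵢ ∧ (bᵢ* ⌋ w)`; contracting
`bⱼ ∧ w = 0` with `bᵢ*`, `j ≠ i`, shows that `bᵢ* ⌋ w`, of lower degree, is annihilated by the
other `n - 1` basis vectors, hence is zero by induction.
-/

open Module ExteriorAlgebra

noncomputable section

variable {V : Type*} [AddCommGroup V] [Module ℂ V]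

/-- The subspace `v ∧ ⋀²V` of `⋀³V`, inside the exterior algebra. -/
def vWedge2 (v : V) : Submodule ℂ (ExteriorAlgebra ℂ V) :=
  Submodule.map (LinearMap.mulLeft ℂ (ι ℂ v)) (⋀[ℂ]^2 V)

/-- The image of `⋀²W` in the exterior algebra, for a subspace `W ⊆ V`. -/
def wedge2 (W : Submodule ℂ V) : Submodule ℂ (ExteriorAlgebra ℂ V) :=
  Submodule.span ℂ {z | ∃ w₁ ∈ W, ∃ w₂ ∈ W, z = ι ℂ w₁ * ι ℂ w₂}

/-- The image of `⋀³W` in the exterior algebra, for a subspace `W ⊆ V`. -/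
def wedge3 (W : Submodule ℂ V) : Submodule ℂ (ExteriorAlgebra ℂ V) :=
  Submodule.span ℂ
    {z | ∃ w₁ ∈ W, ∃ w₂ ∈ W, ∃ w₃ ∈ W, z = ι ℂ w₁ * ι ℂ w₂ * ι ℂ w₃}

/-- The radical of the form `q_A` on `⋀²V₀`, i.e. `{α ∈ ⋀²V₀ | ∀ β ∈ ⋀²V₀, q_A(β,α) = 0}`,
where `q_A(β,α) = vol(v₀ ∧ β ∧ q̃_A(α))` and `qt` plays the role of `q̃_A`. -/
def radFull (vol : ExteriorAlgebra ℂ V →ₗ[ℂ] ℂ) (v₀ : V)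
    (qt : ExteriorAlgebra ℂ V →ₗ[ℂ] ExteriorAlgebra ℂ V)
    (V₀ : Submodule ℂ V) : Submodule ℂ (ExteriorAlgebra ℂ V) :=
  wedge2 V₀ ⊓ ⨅ β ∈ wedge2 V₀,
    LinearMap.ker (vol ∘ₗ LinearMap.mulLeft ℂ (ι ℂ v₀) ∘ₗ LinearMap.mulLeft ℂ β ∘ₗ qt)

end

lemma mul_add_pow_eq_mul_pow {S : Type*} [Semiring S] {a b : S} (h : Commute a b) (ha : a * a = 0)
    (k : ℕ) : a * (a + b) ^ k = a * b ^ k := by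
  induction k with
  | zero => simp only [pow_zero]
  | succ k ih =>
    calc a * (a + b) ^ (k + 1) = b * (a * (a + b) ^ k) := by
          rw [pow_succ', ← mul_assoc, mul_add, ha, zero_add, h.eq, mul_assoc]
      _ = a * b ^ (k + 1) := by rw [ih, ← mul_assoc, ← h.eq, mul_assoc, pow_succ']

section CommRing

open CliffordAlgebra (contractLeft contractLeft_ι_mul contractLeft_algebraMap)

variable {R M N : Type*} [CommRing R] [AddCommGroup M] [Module R M]
  [AddCommGroup N] [Module R N]

lemma ι_mul_mem_exteriorPower (v : M) {k : ℕ} {x : ExteriorAlgebra R M} (hx : x ∈ ⋀[R]^k M) :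
    ι R v * x ∈ ⋀[R]^(k + 1) M := by
  rw [exteriorPower, pow_succ']
  exact Submodule.mul_mem_mul (LinearMap.mem_range_self _ v) hx

lemma map_ι_pow_le_exteriorPower (W : Submodule R M) (k : ℕ) : W.map (ι R) ^ k ≤ ⋀[R]^k M :=
  pow_le_pow_left' LinearMap.map_le_range k

lemma contractLeft_mem_exteriorPower (f : Dual R M) {k : ℕ} {w : ExteriorAlgebra R M}
    (hw : w ∈ ⋀[R]^(k + 1) M) : contractLeft f w ∈ ⋀[R]^k M := by
  induction k generalizing w with
  | zero =>
    rw [zero_add, exteriorPower, pow_one] at hw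
    obtain ⟨v, rfl⟩ := hw
    rw [CliffordAlgebra.contractLeft_ι]
    exact Submodule.algebraMap_mem _
  | succ k ih =>
    rw [exteriorPower, pow_succ'] at hw
    induction hw using Submodule.mul_induction_on' with
    | mem_mul_mem m hm x hx =>
      obtain ⟨v, rfl⟩ := hm
      rw [contractLeft_ι_mul]
      exact sub_mem (Submodule.smul_mem _ _ hx) (ι_mul_mem_exteriorPower v (ih hx))
    | add x _ y _ hx hy => simpa only [map_add] using add_mem hx hy

lemma contractLeft_eq_zero_of_le_ker {f : Dual R M} {W : Submodule R M}
    (hf : W ≤ LinearMap.ker f) {k : ℕ} {w : ExteriorAlgebra R M} (hw : w ∈ W.map (ι R) ^ k) :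
    contractLeft f w = 0 := by
  induction hw using Submodule.pow_induction_on_left' with
  | algebraMap r => exact contractLeft_algebraMap _ f r
  | add x y k _ _ hx hy => rw [map_add, hx, hy, add_zero]
  | mem_mul m hm _ x _ hx =>
    obtain ⟨v, hv, rfl⟩ := hm
    rw [contractLeft_ι_mul, hx, LinearMap.mem_ker.mp (hf hv), zero_smul, mul_zero, sub_zero]

lemma smul_eq_ι_mul_contractLeft (f : Dual R M) {v : M} {w : ExteriorAlgebra R M}
    (h : ι R v * w = 0) : f v • w = ι R v * contractLeft f w := by
  rw [← sub_eq_zero, ← contractLeft_ι_mul, h, map_zero]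

lemma eq_zero_of_forall_basis_ι_mul_eq_zero {I : Type*} (b : Basis I R M)
    {s : Finset I} {k : ℕ} (hk : k < s.card) {w : ExteriorAlgebra R M} (hw : w ∈ ⋀[R]^k M)
    (h : ∀ i ∈ s, ι R (b i) * w = 0) : w = 0 := by
  classical
  induction k generalizing s w with
  | zero =>
    obtain ⟨i, hi⟩ := Finset.card_pos.mp hk
    rw [exteriorPower, pow_zero, Submodule.mem_one] at hw
    obtain ⟨r, rfl⟩ := hw
    have hsmul := smul_eq_ι_mul_contractLeft (b.coord i) (h i hi)
    simpa [contractLeft_algebraMap] using hsmul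
  | succ k ih =>
    obtain ⟨i, hi⟩ := Finset.card_pos.mp (k.succ_pos.trans hk)
    have hcontract : contractLeft (b.coord i) w = 0 := by
      refine ih (s := s.erase i) (by rw [Finset.card_erase_of_mem hi]; lia)
        (contractLeft_mem_exteriorPower _ hw) fun j hj => ?_
      obtain ⟨hji, hjs⟩ := Finset.mem_erase.mp hj
      have hsmul := smul_eq_ι_mul_contractLeft (b.coord i) (h j hjs)
      rw [← hsmul, b.coord_apply, b.repr_self, Finsupp.single_eq_of_ne hji.symm, zero_smul]
    simpa [hcontract] using smul_eq_ι_mul_contractLeft (b.coord i) (h i hi)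

lemma eq_zero_of_forall_exteriorPower_mul_eq_zero {I : Type*} [Fintype I] (b : Basis I R M)
    {p q : ℕ} (hpq : p + q ≤ Fintype.card I) {w : ExteriorAlgebra R M} (hw : w ∈ ⋀[R]^q M)
    (h : ∀ x ∈ ⋀[R]^p M, x * w = 0) : w = 0 := by
  induction p generalizing q w with
  | zero => simpa using h 1 (by simp [exteriorPower])
  | succ p ih =>
    refine eq_zero_of_forall_basis_ι_mul_eq_zero b (s := Finset.univ) (k := q)
      (by rw [Finset.card_univ]; lia) hw fun i _ => ?_
    refine ih (by lia) (ι_mul_mem_exteriorPower (b i) hw) fun x hx => ?_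
    rw [← mul_assoc]
    refine h _ ?_
    rw [exteriorPower, pow_succ]
    exact Submodule.mul_mem_mul hx (LinearMap.mem_range_self _ (b i))

lemma commute_map_ι (P Q : Submodule R M) : Commute (P.map (ι R)) (Q.map (ι R)) := by
  have mul_le (P Q : Submodule R M) : P.map (ι R) * Q.map (ι R) ≤ Q.map (ι R) * P.map (ι R) := by
    rw [Submodule.mul_le]
    rintro _ ⟨x, hx, rfl⟩ _ ⟨y, hy, rfl⟩
    rw [eq_neg_of_add_eq_zero_left (ι_add_mul_swap x y)]
    exact neg_mem (Submodule.mul_mem_mul ⟨y, hy, rfl⟩ ⟨x, hx, rfl⟩)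
  exact (mul_le P Q).antisymm (mul_le Q P)

lemma span_ι_mul_exteriorPower {v : M} {W : Submodule R M} (hvW : Codisjoint (R ∙ v) W) (k : ℕ) :
    (R ∙ ι R v) * ⋀[R]^k M = (R ∙ ι R v) * W.map (ι R) ^ k := by
  have hspan : (R ∙ ι R v) = (R ∙ v).map (ι R) := by rw [Submodule.map_span, Set.image_singleton]
  have hsq : (R ∙ ι R v) * (R ∙ ι R v) = 0 := by
    rw [Submodule.span_mul_span, Set.singleton_mul_singleton, ι_sq_zero,
      Submodule.span_zero_singleton, Submodule.zero_eq_bot]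
  have hrange : LinearMap.range (ι R) = (R ∙ ι R v) + W.map (ι R) := by
    rw [hspan, Submodule.add_eq_sup, ← Submodule.map_sup, hvW.eq_top, Submodule.map_top]
  rw [exteriorPower, hrange]
  exact mul_add_pow_eq_mul_pow (hspan ▸ commute_map_ι _ _) hsq k

lemma map_mulLeft_ι_exteriorPower {v : M} {W : Submodule R M} (hvW : Codisjoint (R ∙ v) W)
    (k : ℕ) :
    (⋀[R]^k M).map (LinearMap.mulLeft R (ι R v)) =
      (W.map (ι R) ^ k).map (LinearMap.mulLeft R (ι R v)) := by
  ext x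
  simpa only [Submodule.mem_span_singleton_mul, Submodule.mem_map, LinearMap.mulLeft_apply] using
    SetLike.ext_iff.mp (span_ι_mul_exteriorPower hvW k) x

lemma exists_ι_mul_eq_mul_ι {v : M} {W : Submodule R M} (hvW : Codisjoint (R ∙ v) W) {k : ℕ}
    {x : ExteriorAlgebra R M} (hx : x ∈ ⋀[R]^k M) :
    ∃ y ∈ W.map (ι R) ^ k, ι R v * y = x * ι R v := by
  have hcomm : Commute (⋀[R]^k M) (R ∙ ι R v) := by
    simpa only [Submodule.map_top, Submodule.map_span, Set.image_singleton] using
      (commute_map_ι (⊤ : Submodule R M) (R ∙ v)).pow_left k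
  rw [← Submodule.mem_span_singleton_mul (R := R), ← span_ι_mul_exteriorPower hvW, ← hcomm.eq]
  exact Submodule.mul_mem_mul hx (Submodule.mem_span_singleton_self _)

/-- The radical, in the argument `α`, of the form `(β, α) ↦ vol (v ∧ β ∧ q α)` on a submodule `P` of
the exterior algebra. The form `q_A` is the case where `P` is the image of `⋀²V₀` and `q = q̃_A`. -/
def wedgeRadical (vol : ExteriorAlgebra R M →ₗ[R] N) (v : M)
    (q : ExteriorAlgebra R M →ₗ[R] ExteriorAlgebra R M) (P : Submodule R (ExteriorAlgebra R M)) :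
    Submodule R (ExteriorAlgebra R M) :=
  P ⊓ ⨅ β ∈ P,
    LinearMap.ker (vol ∘ₗ LinearMap.mulLeft R (ι R v) ∘ₗ LinearMap.mulLeft R β ∘ₗ q)

lemma mem_wedgeRadical {vol : ExteriorAlgebra R M →ₗ[R] N} {v : M}
    {q : ExteriorAlgebra R M →ₗ[R] ExteriorAlgebra R M} {P : Submodule R (ExteriorAlgebra R M)}
    {α : ExteriorAlgebra R M} :
    α ∈ wedgeRadical vol v q P ↔ α ∈ P ∧ ∀ β ∈ P, vol (ι R v * (β * q α)) = 0 := by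
  simp [wedgeRadical]

end CommRing

section Field

variable {K V N : Type*} [Field K] [AddCommGroup V] [Module K V] [AddCommGroup N] [Module K N]

lemma disjoint_map_ι_pow_ker_mulLeft_ι {v : V} {W : Submodule K V} (hv : v ∉ W) (k : ℕ) :
    Disjoint (W.map (ι K) ^ k) (LinearMap.ker (LinearMap.mulLeft K (ι K v))) := by
  obtain ⟨f, hfv, hfW⟩ := Submodule.exists_le_ker_of_notMem hv
  rw [LinearMap.disjoint_ker]
  intro w hw hvw
  have hsmul := smul_eq_ι_mul_contractLeft f hvw
  rw [contractLeft_eq_zero_of_le_ker hfW hw, mul_zero] at hsmul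
  exact (smul_eq_zero.mp hsmul).resolve_left hfv

variable [FiniteDimensional K V]

lemma eq_zero_of_forall_ι_mul_mul_eq_zero {v : V} {W : Submodule K V} (hv : v ∉ W)
    (hvW : Codisjoint (K ∙ v) W) {p q : ℕ} (hpq : p + q < finrank K V) {γ : ExteriorAlgebra K V}
    (hγ : γ ∈ W.map (ι K) ^ q) (h : ∀ β ∈ W.map (ι K) ^ p, ι K v * (β * γ) = 0) : γ = 0 := by
  refine LinearMap.disjoint_ker.mp (disjoint_map_ι_pow_ker_mulLeft_ι hv q) γ hγ ?_
  refine eq_zero_of_forall_exteriorPower_mul_eq_zero (finBasis K V) (p := p) (q := q + 1)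
    (by rw [Fintype.card_fin]; lia)
    (ι_mul_mem_exteriorPower v (map_ι_pow_le_exteriorPower W q hγ)) fun x hx => ?_
  obtain ⟨β, hβ, hβx⟩ := exists_ι_mul_eq_mul_ι hvW hx
  rw [LinearMap.mulLeft_apply, ← mul_assoc, ← hβx, mul_assoc, h β hβ]

lemma forall_apply_ι_mul_mul_eq_zero_iff {v : V} {W : Submodule K V} (hv : v ∉ W)
    (hvW : Codisjoint (K ∙ v) W) {p q : ℕ} (hpq : p + q < finrank K V)
    {vol : ExteriorAlgebra K V →ₗ[K] N} (hvol : Set.InjOn vol (⋀[K]^(p + q + 1) V))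
    {γ : ExteriorAlgebra K V} (hγ : γ ∈ W.map (ι K) ^ q) :
    (∀ β ∈ W.map (ι K) ^ p, vol (ι K v * (β * γ)) = 0) ↔ γ = 0 := by
  refine ⟨fun h => ?_, fun h β _ => by rw [h, mul_zero, mul_zero, map_zero]⟩
  refine eq_zero_of_forall_ι_mul_mul_eq_zero hv hvW (p := p) hpq hγ fun β hβ => ?_
  have hmem : ι K v * (β * γ) ∈ ⋀[K]^(p + q + 1) V := by
    refine ι_mul_mem_exteriorPower v (map_ι_pow_le_exteriorPower W (p + q) ?_)
    rw [pow_add]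
    exact Submodule.mul_mem_mul hβ hγ
  exact hvol hmem (zero_mem _) ((h β hβ).trans (map_zero vol).symm)

theorem stmt_11_general {p q : ℕ} (hpq : p + q < finrank K V)
    (vol : ExteriorAlgebra K V →ₗ[K] N) (hvol : Set.InjOn vol (⋀[K]^(p + q + 1) V))
    (A : Submodule K (ExteriorAlgebra K V)) (v₀ : V) (hv₀ : v₀ ≠ 0) (V₀ : Submodule K V)
    (hcompl : IsCompl (K ∙ v₀) V₀) (hAV₀ : Disjoint A (V₀.map (ι K) ^ q))
    (qt : ExteriorAlgebra K V →ₗ[K] ExteriorAlgebra K V)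
    (hqt : ∀ β ∈ V₀.map (ι K) ^ p, qt β ∈ V₀.map (ι K) ^ q ∧ ι K v₀ * β + qt β ∈ A) :
    wedgeRadical vol v₀ qt (V₀.map (ι K) ^ p) =
        V₀.map (ι K) ^ p ⊓ A.comap (LinearMap.mulLeft K (ι K v₀)) ∧
    (wedgeRadical vol v₀ qt (V₀.map (ι K) ^ p)).map (LinearMap.mulLeft K (ι K v₀)) =
        A ⊓ (⋀[K]^p V).map (LinearMap.mulLeft K (ι K v₀)) ∧
    Set.InjOn (fun α => ι K v₀ * α) (wedgeRadical vol v₀ qt (V₀.map (ι K) ^ p)) := by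
  have hv₀V₀ : v₀ ∉ V₀ := (Submodule.disjoint_span_singleton' hv₀).mp hcompl.disjoint.symm
  have hrad : wedgeRadical vol v₀ qt (V₀.map (ι K) ^ p) =
      V₀.map (ι K) ^ p ⊓ A.comap (LinearMap.mulLeft K (ι K v₀)) := by
    ext α
    rw [mem_wedgeRadical, Submodule.mem_inf, Submodule.mem_comap, LinearMap.mulLeft_apply]
    refine and_congr_right fun hα => ?_
    obtain ⟨hqα, hαA⟩ := hqt α hα
    rw [forall_apply_ι_mul_mul_eq_zero_iff hv₀V₀ hcompl.codisjoint hpq hvol hqα]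
    refine ⟨fun h0 => by simpa only [h0, add_zero] using hαA, fun hα₀ => ?_⟩
    exact Submodule.disjoint_def.mp hAV₀ _ ((A.add_mem_iff_right hα₀).mp hαA) hqα
  refine ⟨hrad, ?_, ?_⟩
  · rw [hrad, map_mulLeft_ι_exteriorPower hcompl.codisjoint, inf_comm A,
      Submodule.map_inf_eq_map_inf_comap]
  · exact LinearMap.injOn_of_disjoint_ker inf_le_left (disjoint_map_ι_pow_ker_mulLeft_ι hv₀V₀ p)

end Field

section Complex

variable {V : Type*} [AddCommGroup V] [Module ℂ V]

open scoped Pointwise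

lemma wedge2_eq_pow (W : Submodule ℂ V) : wedge2 W = W.map (ι ℂ) ^ 2 := by
  rw [wedge2, Submodule.pow_eq_span_pow_set, pow_two]
  congr 1
  ext z
  simp [Set.mem_mul, eq_comm]

lemma wedge3_eq_pow (W : Submodule ℂ V) : wedge3 W = W.map (ι ℂ) ^ 3 := by
  rw [wedge3, Submodule.pow_eq_span_pow_set, pow_three']
  congr 1
  ext z
  simp [Set.mem_mul, and_assoc, eq_comm]

lemma radFull_eq_wedgeRadical (vol : ExteriorAlgebra ℂ V →ₗ[ℂ] ℂ) (v₀ : V)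
    (qt : ExteriorAlgebra ℂ V →ₗ[ℂ] ExteriorAlgebra ℂ V) (V₀ : Submodule ℂ V) :
    radFull vol v₀ qt V₀ = wedgeRadical vol v₀ qt (wedge2 V₀) :=
  rfl

end Complex

/-- With `V` six-dimensional, `A ⊆ ⋀³V` Lagrangian, `0 ≠ v₀ ∈ V` and `V₀`
a 5-dimensional complement of `ℂv₀` with `A ∩ ⋀³V₀ = 0`:  the radical of `q_A` equals
`{α ∈ ⋀²V₀ : v₀∧α ∈ A}`, and `α ↦ v₀∧α` is a linear isomorphism from this radical onto
`A ∩ (v₀∧⋀²V)`. -/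
theorem stmt_11 {V : Type*} [AddCommGroup V] [Module ℂ V] [FiniteDimensional ℂ V]
    (hV : finrank ℂ V = 6)
    (vol : ExteriorAlgebra ℂ V →ₗ[ℂ] ℂ)
    (hvol : Function.Bijective fun x : ⋀[ℂ]^6 V => vol x)
    (A : Submodule ℂ (ExteriorAlgebra ℂ V))
    (hA3 : A ≤ ⋀[ℂ]^3 V) (hA10 : finrank ℂ A = 10)
    (hLag : ∀ α ∈ A, ∀ β ∈ A, vol (α * β) = 0)
    (v₀ : V) (hv₀ : v₀ ≠ 0)
    (V₀ : Submodule ℂ V) (hV₀ : finrank ℂ V₀ = 5)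
    (hcompl : IsCompl (Submodule.span ℂ {v₀}) V₀)
    (hAV₀ : A ⊓ wedge3 V₀ = ⊥)
    -- `qt` is the linear map `q̃_A : ⋀²V₀ → ⋀³V₀`, characterized by `v₀∧β + q̃_A(β) ∈ A`:
    (qt : ExteriorAlgebra ℂ V →ₗ[ℂ] ExteriorAlgebra ℂ V)
    (hqt : ∀ β ∈ wedge2 V₀, qt β ∈ wedge3 V₀ ∧ ι ℂ v₀ * β + qt β ∈ A) :
    radFull vol v₀ qt V₀ =
        wedge2 V₀ ⊓ Submodule.comap (LinearMap.mulLeft ℂ (ι ℂ v₀)) A ∧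
    Submodule.map (LinearMap.mulLeft ℂ (ι ℂ v₀)) (radFull vol v₀ qt V₀) =
        A ⊓ vWedge2 v₀ ∧
    Set.InjOn (fun α => ι ℂ v₀ * α)
        (radFull vol v₀ qt V₀ : Set (ExteriorAlgebra ℂ V)) := by
  simp only [wedge2_eq_pow, wedge3_eq_pow] at hAV₀ hqt
  rw [radFull_eq_wedgeRadical, wedge2_eq_pow]
  exact stmt_11_general (p := 2) (q := 3) (by lia) vol
    (Set.injOn_iff_injective.mpr hvol.injective) A v₀ hv₀ V₀ hcompl (disjoint_iff.mpr hAV₀) qt hqt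
end

section
/- Define the symmetric ℤ-bilinear form b on ℤ[√2] by b(z,w) = −(z·w̄ + z̄·w), and for n ∈ ℤ let h_n = (−1+√2)·(3+2√2)ⁿ. Then: if n > 0, the element β = 2·(3−2√2)^{−n+1} satisfies b(h_n, β) = −4 and b(β, −1+√2) > 0; if n < 0, the element β = −2·(3−2√2)^{−n} satisfies b(h_n, β) = −4 and b(β, −1+√2) > 0. In particular, for every nonzero n ∈ ℤ there exists β ∈ ℤ[√2] of the form ±2·(3−2√2)^k (k ∈ ℤ) with b(β, −1+√2) > 0 and b(h_n, β) < 0. -/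
/-- The unit `3 + 2√2` of `ℤ[√2]`. -/
def fundUnit : (ℤ√2)ˣ where
  val := ⟨3, 2⟩
  inv := ⟨3, -2⟩
  val_inv := by decide
  inv_val := by decide

/-- The unit `3 − 2√2` of `ℤ[√2]` (inverse of `3 + 2√2`). -/
def unit32 : (ℤ√2)ˣ where
  val := ⟨3, -2⟩
  inv := ⟨3, 2⟩
  val_inv := by decide
  inv_val := by decide

/-- The symmetric ℤ-bilinear form `b(z,w) = −(z·w̄ + z̄·w)` on `ℤ[√2]`
(its value lies in `ℤ ⊆ ℤ[√2]`; we record its real part). -/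
def bform (z w : ℤ√2) : ℤ := (-(z * star w + star z * w)).re

/-- `h_n = (−1+√2)·(3+2√2)ⁿ`. -/
def hN (n : ℤ) : ℤ√2 := (⟨-1, 1⟩ : ℤ√2) * ((fundUnit ^ n : (ℤ√2)ˣ) : ℤ√2)

/-!
Write `u = 3 + 2√2` and `h₀ = -1 + √2`. Since `u` has norm `1`, multiplication by powers of `u` is
an isometry of `b` and conjugation inverts `u`. Hence `b(hₙ, 2uⁿ⁻¹) = b(h₀u, 2)` and
`b(hₙ, -2uⁿ) = b(h₀, -2)` do not depend on `n`, and both equal `-4`.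

For `0 ≤ k` the value `b(uᵏ, h₀)` is positive, because `uᵏ = x + y√2` with `x > 0` and `y ≥ 0`, and
`b(x + y√2, h₀) = 2x + 4y`. Since conjugation sends `h₀` to `-h₀u`, there is a reflection
`b(u⁻ᵏ⁻¹, h₀) = -b(uᵏ, h₀)`, which makes `b(uᵏ, h₀)` negative for `k < 0`.
-/

/-- The solution `(3, 2)` of `x² - 2y² = 1`, that is, `fundUnit` seen as an element of norm one. It
gives access to Mathlib's results on powers of Pell solutions. -/
def fundSolution : Pell.Solution₁ 2 := .mk 3 2 (by norm_num)

theorem coe_fundUnit_zpow (n : ℤ) :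
    ((fundUnit ^ n : (ℤ√2)ˣ) : ℤ√2) = (fundSolution ^ n : Pell.Solution₁ 2) := by
  have fundUnit_eq : fundUnit = Unitary.toUnits fundSolution := Units.ext rfl
  rw [fundUnit_eq]
  exact congrArg Units.val (map_zpow Unitary.toUnits fundSolution n).symm

theorem coe_unit32_zpow (n : ℤ) :
    ((unit32 ^ n : (ℤ√2)ˣ) : ℤ√2) = (fundSolution ^ (-n) : Pell.Solution₁ 2) := by
  have unit32_eq : unit32 = fundUnit⁻¹ := rfl
  rw [unit32_eq, inv_zpow', coe_fundUnit_zpow]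

theorem bform_eq (z w : ℤ√2) : bform z w = 4 * (z.im * w.im) - 2 * (z.re * w.re) := by
  simp only [bform, Zsqrtd.re_neg, Zsqrtd.re_add, Zsqrtd.re_mul, Zsqrtd.re_star, Zsqrtd.im_star]
  ring

theorem bform_neg_left (z w : ℤ√2) : bform (-z) w = -bform z w := by
  simp only [bform_eq, Zsqrtd.re_neg, Zsqrtd.im_neg]
  ring

theorem bform_add_left (z z' w : ℤ√2) : bform (z + z') w = bform z w + bform z' w := by
  simp only [bform_eq, Zsqrtd.re_add, Zsqrtd.im_add]
  ring

theorem bform_mul_mul_right (z w a : ℤ√2) : bform (z * a) (w * a) = a.norm * bform z w := by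
  simp only [bform_eq, Zsqrtd.re_mul, Zsqrtd.im_mul, Zsqrtd.norm_def]
  ring

theorem bform_mul_solution_mul_solution (z w : ℤ√2) (a : Pell.Solution₁ 2) :
    bform (z * a) (w * a) = bform z w := by
  rw [bform_mul_mul_right, Zsqrtd.norm_eq_one_iff_mem_unitary.mpr a.property, one_mul]

theorem bform_solution_left (a : Pell.Solution₁ 2) : bform a ⟨-1, 1⟩ = 2 * a.x + 4 * a.y := by
  rw [bform_eq, Pell.Solution₁.x, Pell.Solution₁.y]
  ring

theorem bform_mul_fundSolution_inv_left (a : Pell.Solution₁ 2) :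
    bform ((a * fundSolution)⁻¹ : Pell.Solution₁ 2) ⟨-1, 1⟩ = -bform a ⟨-1, 1⟩ := by
  have x_eq : fundSolution.x = 3 := rfl
  have y_eq : fundSolution.y = 2 := rfl
  simp only [bform_solution_left, Pell.Solution₁.x_inv, Pell.Solution₁.y_inv,
    Pell.Solution₁.x_mul, Pell.Solution₁.y_mul, x_eq, y_eq]
  ring

theorem bform_solution_zpow_pos {a : Pell.Solution₁ 2} (hx : 0 < a.x) (hy : 0 < a.y) {k : ℤ}
    (hk : 0 ≤ k) : 0 < bform (a ^ k : Pell.Solution₁ 2) ⟨-1, 1⟩ := by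
  have x_pos : 0 < (a ^ k).x := Pell.Solution₁.x_zpow_pos hx k
  have y_nonneg : 0 ≤ (a ^ k).y := by
    rcases hk.eq_or_lt with rfl | k_pos
    · rw [zpow_zero, Pell.Solution₁.y_one]
    · exact (Pell.Solution₁.y_zpow_pos hx hy k_pos).le
  rw [bform_solution_left]
  positivity

theorem bform_fundSolution_zpow_pos {k : ℤ} (hk : 0 ≤ k) :
    0 < bform (fundSolution ^ k : Pell.Solution₁ 2) ⟨-1, 1⟩ :=
  bform_solution_zpow_pos (by decide) (by decide) hk

theorem bform_fundSolution_zpow_neg {k : ℤ} (hk : k < 0) :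
    bform (fundSolution ^ k : Pell.Solution₁ 2) ⟨-1, 1⟩ < 0 := by
  have zpow_eq : fundSolution ^ k = (fundSolution ^ (-k - 1) * fundSolution)⁻¹ := by
    rw [← zpow_add_one, ← zpow_neg, sub_add_cancel, neg_neg]
  rw [zpow_eq, bform_mul_fundSolution_inv_left, neg_lt_zero]
  exact bform_fundSolution_zpow_pos (by lia)

theorem bform_hN_two_mul_unit32_zpow (n : ℤ) :
    bform (hN n) (2 * ((unit32 ^ (-n + 1) : (ℤ√2)ˣ) : ℤ√2)) = -4 := by
  have hN_eq : hN n = ⟨1, 1⟩ * (fundSolution ^ (n - 1) : Pell.Solution₁ 2) := by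
    have zpow_eq : fundUnit ^ n = fundUnit * fundUnit ^ (n - 1) := by
      rw [← zpow_one_add, add_sub_cancel]
    rw [hN, zpow_eq, Units.val_mul, ← mul_assoc, coe_fundUnit_zpow]
    rfl
  rw [hN_eq, coe_unit32_zpow, neg_add', neg_neg, bform_mul_solution_mul_solution]
  rfl

theorem bform_hN_neg_two_mul_unit32_zpow (n : ℤ) :
    bform (hN n) (-(2 * ((unit32 ^ (-n) : (ℤ√2)ˣ) : ℤ√2))) = -4 := by
  rw [hN, coe_fundUnit_zpow, coe_unit32_zpow, neg_neg, ← neg_mul,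
    bform_mul_solution_mul_solution]
  rfl

theorem bform_two_mul_unit32_zpow_pos {k : ℤ} (hk : k ≤ 0) :
    0 < bform (2 * ((unit32 ^ k : (ℤ√2)ˣ) : ℤ√2)) ⟨-1, 1⟩ := by
  have power_pos := bform_fundSolution_zpow_pos (neg_nonneg.mpr hk)
  rw [coe_unit32_zpow, two_mul, bform_add_left]
  exact add_pos power_pos power_pos

theorem bform_neg_two_mul_unit32_zpow_pos {k : ℤ} (hk : 0 < k) :
    0 < bform (-(2 * ((unit32 ^ k : (ℤ√2)ˣ) : ℤ√2))) ⟨-1, 1⟩ := by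
  have power_neg := bform_fundSolution_zpow_neg (neg_lt_zero.mpr hk)
  rw [coe_unit32_zpow, bform_neg_left, two_mul, bform_add_left, neg_pos]
  exact add_neg power_neg power_neg

/-- For `n > 0` the element `β = 2·(3−2√2)^(−n+1)` satisfies
`b(h_n, β) = −4` and `b(β, −1+√2) > 0`; for `n < 0` the element `β = −2·(3−2√2)^(−n)`
satisfies the same; in particular for every nonzero `n` there is `β = ±2·(3−2√2)^k`
with `b(β, −1+√2) > 0` and `b(h_n, β) < 0`. -/
theorem stmt_16 (n : ℤ) :
    (0 < n →
      bform (hN n) (2 * ((unit32 ^ (-n + 1) : (ℤ√2)ˣ) : ℤ√2)) = -4 ∧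
      0 < bform (2 * ((unit32 ^ (-n + 1) : (ℤ√2)ˣ) : ℤ√2)) ⟨-1, 1⟩) ∧
    (n < 0 →
      bform (hN n) (-(2 * ((unit32 ^ (-n) : (ℤ√2)ˣ) : ℤ√2))) = -4 ∧
      0 < bform (-(2 * ((unit32 ^ (-n) : (ℤ√2)ˣ) : ℤ√2))) ⟨-1, 1⟩) ∧
    (n ≠ 0 → ∃ (ε : ℤ√2) (k : ℤ), (ε = 1 ∨ ε = -1) ∧
      0 < bform (ε * (2 * ((unit32 ^ k : (ℤ√2)ˣ) : ℤ√2))) ⟨-1, 1⟩ ∧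
      bform (hN n) (ε * (2 * ((unit32 ^ k : (ℤ√2)ˣ) : ℤ√2))) < 0) := by
  refine ⟨fun n_pos => ⟨bform_hN_two_mul_unit32_zpow n, bform_two_mul_unit32_zpow_pos (by lia)⟩,
    fun n_neg => ⟨bform_hN_neg_two_mul_unit32_zpow n,
      bform_neg_two_mul_unit32_zpow_pos (by lia)⟩, fun hn => ?_⟩
  rcases hn.lt_or_gt with n_neg | n_pos
  · refine ⟨-1, -n, .inr rfl, ?_⟩
    rw [neg_one_mul, bform_hN_neg_two_mul_unit32_zpow]
    exact ⟨bform_neg_two_mul_unit32_zpow_pos (by lia), by decide⟩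
  · refine ⟨1, -n + 1, .inl rfl, ?_⟩
    rw [one_mul, bform_hN_two_mul_unit32_zpow]
    exact ⟨bform_two_mul_unit32_zpow_pos (by lia), by decide⟩
end
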